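/- For every τ in the upper half-plane with J(τ) ≠ 0 and J(τ) ≠ 1 (so that J'(τ) ≠ 0 and E6(τ) ≠ 0), the logarithmic derivative of E6 satisfies E6'(τ)/E6(τ) = 3 J''(τ)/J'(τ) − 2 J'(τ)/J(τ) − J'(τ)/(J(τ) − 1). -/

import Mathlib

open Complex Filter Topology

noncomputable section

/-- The nome `q = e^{2πiτ}`. -/
def qq (τ : ℂ) : ℂ := Complex.exp (2 * Real.pi * Complex.I * τ)

/-- The Eisenstein series `E₄(τ) = 1 + 240 Σ_{n≥1} σ₃(n) qⁿ`. -/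
def E4 (τ : ℂ) : ℂ := 1 + 240 * ∑' n : ℕ, (∑ d ∈ (n + 1).divisors, (d : ℂ) ^ 3) * qq τ ^ (n + 1)

/-- The Eisenstein series `E₆(τ) = 1 − 504 Σ_{n≥1} σ₅(n) qⁿ`. -/
def E6 (τ : ℂ) : ℂ := 1 - 504 * ∑' n : ℕ, (∑ d ∈ (n + 1).divisors, (d : ℂ) ^ 5) * qq τ ^ (n + 1)

/-- The normalized elliptic modular function `J = E₄³ / (E₄³ − E₆²)`. -/
def J (τ : ℂ) : ℂ := E4 τ ^ 3 / (E4 τ ^ 3 - E6 τ ^ 2)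

/-- The Dedekind eta function `η(τ) = e^{πiτ/12} ∏_{n≥1} (1 − qⁿ)`. -/
def dedekindEta (τ : ℂ) : ℂ := Complex.exp (Real.pi * Complex.I * τ / 12) * ∏' n : ℕ, (1 - qq τ ^ (n + 1))

/-- The elliptic point `ρ = e^{2πi/3}`. -/
def rho : ℂ := Complex.exp (2 * Real.pi * Complex.I / 3)

section RankinCohenBracket

open UpperHalfPlane hiding I J
open ModularForm EisensteinSeries Derivative
open scoped MatrixGroups Manifold ModularForm

theorem E4_eq_E₄ (z : ℍ) : E4 z = ModularForm.E₄ z := by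
  have h := EisensteinSeries.q_expansion_bernoulli (k := 4) (by norm_num) ⟨2, rfl⟩ z
  simp_rw [zpow_natCast] at h
  rw [tsum_pnat_eq_tsum_succ (f := fun n ↦
    (ArithmeticFunction.sigma (4 - 1) n : ℂ) * cexp (2 * Real.pi * I * z) ^ n)] at h
  have hcoeff := E₄_qExpansion_coeff_one
  rw [E_qExpansion_coeff _ ⟨2, rfl⟩, if_neg one_ne_zero, ArithmeticFunction.sigma_one,
    Nat.cast_one, mul_one, neg_eq_iff_eq_neg] at hcoeff
  rw [h, hcoeff, E4]
  simp only [ArithmeticFunction.sigma_apply, qq]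
  push_cast
  norm_num

theorem E6_eq_E₆ (z : ℍ) : E6 z = ModularForm.E₆ z := by
  have h := EisensteinSeries.q_expansion_bernoulli (k := 6) (by norm_num) ⟨3, rfl⟩ z
  simp_rw [zpow_natCast] at h
  rw [tsum_pnat_eq_tsum_succ (f := fun n ↦
    (ArithmeticFunction.sigma (6 - 1) n : ℂ) * cexp (2 * Real.pi * I * z) ^ n)] at h
  have hcoeff := E₆_qExpansion_coeff_one
  rw [E_qExpansion_coeff _ ⟨3, rfl⟩, if_neg one_ne_zero, ArithmeticFunction.sigma_one,
    Nat.cast_one, mul_one, neg_eq_iff_eq_neg] at hcoeff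
  rw [h, hcoeff, E6]
  simp only [ArithmeticFunction.sigma_apply, qq]
  push_cast
  norm_num

theorem tendsto_atImInfty_qExpansion_coeff_zero {k : ℤ} (f : ModularForm 𝒮ℒ k) :
    Tendsto f atImInfty (𝓝 ((qExpansion 1 f).coeff 0)) := by
  have hanal := ModularFormClass.analyticAt_cuspFunction_zero f one_pos one_mem_strictPeriods_SL
  have hper := SlashInvariantFormClass.periodic_comp_ofComplex f one_mem_strictPeriods_SL
  rw [qExpansion_coeff_zero one_pos hanal hper, ← cuspFunction_apply_zero one_pos hanal hper]
  exact (hanal.continuousAt.tendsto.comp (qParam_tendsto_atImInfty one_pos)).congr fun τ ↦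
    SlashInvariantFormClass.eq_cuspFunction f τ one_mem_strictPeriods_SL one_ne_zero

/-- Cauchy's estimate at the cusp. -/
theorem isZeroAtImInfty_normalizedDerivOfComplex {F : ℍ → ℂ} (hF : MDiff F) {c : ℂ}
    (hc : Tendsto F atImInfty (𝓝 c)) : IsZeroAtImInfty (normalizedDerivOfComplex F) := by
  have hd : IsZeroAtImInfty (fun z : ℍ ↦ deriv (F ∘ ofComplex) z) := by
    rw [isZeroAtImInfty_iff]
    intro ε hε
    have hc' : IsZeroAtImInfty (fun z ↦ F z - c) := by
      simpa [IsZeroAtImInfty, ZeroAtFilter] using hc.sub_const c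
    obtain ⟨A, hA⟩ := isZeroAtImInfty_iff.mp hc' ε hε
    refine ⟨max A 1 + 1, fun z hz ↦ ?_⟩
    have him : ∀ w ∈ Metric.closedBall (z : ℂ) 1, max A 1 ≤ w.im := fun w hw ↦ by
      have h1 := (abs_im_le_norm (w - z)).trans (mem_closedBall_iff_norm.mp hw)
      have h2 := (abs_le.mp h1).1
      rw [sub_im, coe_im] at h2
      linarith
    have hdiff : DifferentiableOn ℂ (fun w ↦ (F ∘ ofComplex) w - c)
        (Metric.closedBall (z : ℂ) 1) :=
      ((UpperHalfPlane.mdifferentiable_iff.mp hF).mono fun w hw ↦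
        lt_of_lt_of_le one_pos ((le_max_right A 1).trans (him w hw))).sub_const c
    have := norm_deriv_le_of_forall_mem_sphere_norm_le one_pos
      (hdiff.diffContOnCl_ball subset_rfl) (C := ε) fun w hw ↦ by
        have hw' := him w (Metric.sphere_subset_closedBall hw)
        have hpos : 0 < w.im := lt_of_lt_of_le one_pos ((le_max_right A 1).trans hw')
        simpa [ofComplex_apply_of_im_pos hpos] using
          hA ⟨w, hpos⟩ ((le_max_left A 1).trans hw')
    rwa [deriv_sub_const, div_one] at this
  have := Tendsto.const_mul (2 * Real.pi * I)⁻¹ hd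
  rwa [mul_zero] at this

/-- The first Rankin–Cohen bracket of `E₄` and `E₆`, up to normalization. -/
def eisensteinBracket : ℍ → ℂ :=
  (2 : ℂ) • (⇑ModularForm.E₄ * serreDerivative (6 : ℤ) ModularForm.E₆) -
    (3 : ℂ) • (serreDerivative (4 : ℤ) ModularForm.E₄ * ⇑ModularForm.E₆)

theorem eisensteinBracket_eq : eisensteinBracket =
    (2 : ℂ) • (⇑ModularForm.E₄ * normalizedDerivOfComplex ModularForm.E₆) -
      (3 : ℂ) • (normalizedDerivOfComplex ModularForm.E₄ * ⇑ModularForm.E₆) := by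
  ext z
  simp [eisensteinBracket]
  ring

theorem eisensteinBracket_slash (γ : SL(2, ℤ)) :
    eisensteinBracket ∣[(12 : ℤ)] γ = eisensteinBracket := by
  have h4 : ⇑ModularForm.E₄ ∣[(4 : ℤ)] γ = ModularForm.E₄ :=
    ModularForm.E₄.slash_action_eq' _ ⟨γ, rfl⟩
  have h6 : ⇑ModularForm.E₆ ∣[(6 : ℤ)] γ = ModularForm.E₆ :=
    ModularForm.E₆.slash_action_eq' _ ⟨γ, rfl⟩
  have d4 := serreDerivative_slash_invariant ModularForm.E₄.holo' h4
  have d6 := serreDerivative_slash_invariant ModularForm.E₆.holo' h6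
  have e1 := ModularForm.mul_slash_SL2 4 (6 + 2) γ ModularForm.E₄
    (serreDerivative (6 : ℤ) ModularForm.E₆)
  have e2 := ModularForm.mul_slash_SL2 (4 + 2) 6 γ (serreDerivative (4 : ℤ) ModularForm.E₄)
    ModularForm.E₆
  erw [h4, d6] at e1
  erw [h6, d4] at e2
  norm_num only at e1 e2
  rw [eisensteinBracket, sub_eq_add_neg, SlashAction.add_slash, SlashAction.neg_slash, ModularForm.SL_smul_slash,
    ModularForm.SL_smul_slash]
  exact congrArg₂ (fun f g ↦ (2 : ℂ) • f + -((3 : ℂ) • g)) e1 e2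

theorem eisensteinBracket_isZeroAtImInfty : IsZeroAtImInfty eisensteinBracket := by
  have t4 := tendsto_atImInfty_qExpansion_coeff_zero ModularForm.E₄
  have t6 := tendsto_atImInfty_qExpansion_coeff_zero ModularForm.E₆
  have d4 := isZeroAtImInfty_normalizedDerivOfComplex ModularForm.E₄.holo' t4
  have d6 := isZeroAtImInfty_normalizedDerivOfComplex ModularForm.E₆.holo' t6
  have := ((t4.mul d6).const_mul 2).sub ((Tendsto.mul d4 t6).const_mul 3)
  rw [eisensteinBracket_eq]
  simpa [IsZeroAtImInfty, ZeroAtFilter] using! this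

/-- The Rankin–Cohen bracket of `E₄` and `E₆` as a cusp form of weight 12. -/
def eisensteinBracketCuspForm : CuspForm 𝒮ℒ 12 where
  toFun := eisensteinBracket
  slash_action_eq' A hA := by
    obtain ⟨A, rfl⟩ := hA
    exact eisensteinBracket_slash A
  holo' := by
    change MDiff eisensteinBracket
    rw [eisensteinBracket_eq]
    exact ((ModularForm.E₄.holo'.mul
      (normalizedDerivOfComplex_mdifferentiable ModularForm.E₆.holo')).const_smul 2).sub
      (((normalizedDerivOfComplex_mdifferentiable ModularForm.E₄.holo').mul
        ModularForm.E₆.holo').const_smul 3)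
  zero_at_cusps' hc := by
    rw [Subgroup.IsArithmetic.isCusp_iff_isCusp_SL2Z] at hc
    rw [OnePoint.isZeroAt_iff_forall_SL2Z hc]
    intro γ _
    rw [eisensteinBracket_slash]
    exact eisensteinBracket_isZeroAtImInfty

theorem E4_cube_sub_E6_sq_ne_zero {τ : ℂ} (hτ : 0 < τ.im) : E4 τ ^ 3 - E6 τ ^ 2 ≠ 0 := by
  have h := discriminant_eq_E₄_cube_sub_E₆_sq ⟨τ, hτ⟩
  rw [← E4_eq_E₄, ← E6_eq_E₆] at h
  intro h0
  exact discriminant_ne_zero _ (h.trans (by simp [h0]))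

theorem differentiableOn_E4 : DifferentiableOn ℂ E4 upperHalfPlaneSet :=
  (UpperHalfPlane.mdifferentiable_iff.mp ModularForm.E₄.holo').congr fun τ hτ ↦ by
    simpa [ofComplex_apply_of_im_pos hτ] using! E4_eq_E₄ ⟨τ, hτ⟩

theorem differentiableOn_E6 : DifferentiableOn ℂ E6 upperHalfPlaneSet :=
  (UpperHalfPlane.mdifferentiable_iff.mp ModularForm.E₆.holo').congr fun τ hτ ↦ by
    simpa [ofComplex_apply_of_im_pos hτ] using! E6_eq_E₆ ⟨τ, hτ⟩

theorem deriv_E4_eq (z : ℍ) :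
    deriv E4 z = 2 * Real.pi * I * normalizedDerivOfComplex ModularForm.E₄ z := by
  rw [normalizedDerivOfComplex, mul_inv_cancel_left₀ two_pi_I_ne_zero]
  refine Filter.EventuallyEq.deriv_eq ?_
  filter_upwards [isOpen_upperHalfPlaneSet.mem_nhds z.im_pos] with w hw
  simpa [ofComplex_apply_of_im_pos hw] using! E4_eq_E₄ ⟨w, hw⟩

theorem deriv_E6_eq (z : ℍ) :
    deriv E6 z = 2 * Real.pi * I * normalizedDerivOfComplex ModularForm.E₆ z := by
  rw [normalizedDerivOfComplex, mul_inv_cancel_left₀ two_pi_I_ne_zero]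
  refine Filter.EventuallyEq.deriv_eq ?_
  filter_upwards [isOpen_upperHalfPlaneSet.mem_nhds z.im_pos] with w hw
  simpa [ofComplex_apply_of_im_pos hw] using! E6_eq_E₆ ⟨w, hw⟩

theorem exists_bracket_eq_const_mul_E4_cube_sub_E6_sq : ∃ c : ℂ, ∀ z : ℍ,
    2 * E4 z * deriv E6 z - 3 * deriv E4 z * E6 z = c * (E4 z ^ 3 - E6 z ^ 2) := by
  obtain ⟨c, hc⟩ :=
    CuspForm.exists_smul_discriminant_of_weight_eq_twelve eisensteinBracketCuspForm
  refine ⟨2 * Real.pi * I * c / 1728, fun z ↦ ?_⟩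
  have h : c * discriminant z = eisensteinBracket z := by
    rw [show c * discriminant z = (c • CuspForm.discriminant) z from rfl, hc]
    rfl
  rw [discriminant_eq_E₄_cube_sub_E₆_sq, eisensteinBracket_eq] at h
  simp only [Pi.sub_apply, Pi.smul_apply, Pi.mul_apply, smul_eq_mul] at h
  rw [deriv_E4_eq, deriv_E6_eq, E4_eq_E₄, E6_eq_E₆]
  linear_combination (-(2 * Real.pi * I)) * h

theorem differentiableOn_J : DifferentiableOn ℂ J upperHalfPlaneSet :=
  (differentiableOn_E4.pow 3).div ((differentiableOn_E4.pow 3).sub (differentiableOn_E6.pow 2))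
    fun _ hτ ↦ E4_cube_sub_E6_sq_ne_zero hτ

theorem exists_deriv_J_eq : ∃ c : ℂ, c ≠ 0 ∧ ∀ τ : ℂ, 0 < τ.im →
    deriv J τ = c * E4 τ ^ 2 * E6 τ / (E4 τ ^ 3 - E6 τ ^ 2) := by
  obtain ⟨c, hc⟩ := exists_bracket_eq_const_mul_E4_cube_sub_E6_sq
  have key : ∀ τ : ℂ, 0 < τ.im →
      deriv J τ = c * E4 τ ^ 2 * E6 τ / (E4 τ ^ 3 - E6 τ ^ 2) := fun τ hτ ↦ by
    have h4 := (differentiableOn_E4.differentiableAt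
      (isOpen_upperHalfPlaneSet.mem_nhds hτ)).hasDerivAt
    have h6 := (differentiableOn_E6.differentiableAt
      (isOpen_upperHalfPlaneSet.mem_nhds hτ)).hasDerivAt
    have hne := E4_cube_sub_E6_sq_ne_zero hτ
    have hJ : HasDerivAt J _ τ := (h4.pow 3).div ((h4.pow 3).sub (h6.pow 2)) hne
    rw [hJ.deriv, div_eq_div_iff (pow_ne_zero 2 hne) hne]
    simp only [Pi.pow_apply]
    linear_combination (E4 τ ^ 2 * E6 τ * (E4 τ ^ 3 - E6 τ ^ 2)) * hc ⟨τ, hτ⟩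
  refine ⟨c, ?_, key⟩
  rintro rfl
  have hconst : ∀ z : ℍ, J z = J UpperHalfPlane.I := fun z ↦
    isOpen_upperHalfPlaneSet.is_const_of_deriv_eq_zero
      (convex_halfSpace_im_gt 0).isPreconnected differentiableOn_J
      (fun τ hτ ↦ by simpa using key τ hτ) z.im_pos UpperHalfPlane.I.im_pos
  have heq : ∀ z : ℍ, ModularForm.E₄ z ^ 3 =
      J UpperHalfPlane.I * (1728 * discriminant z) := fun z ↦ by
    rw [← hconst z, J, discriminant_eq_E₄_cube_sub_E₆_sq, ← E4_eq_E₄, ← E6_eq_E₆]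
    field_simp [E4_cube_sub_E6_sq_ne_zero z.im_pos]
  have t4 := tendsto_atImInfty_qExpansion_coeff_zero ModularForm.E₄
  rw [E_qExpansion_coeff_zero _ ⟨2, rfl⟩] at t4
  have hΔ := (Tendsto.const_mul (1728 : ℂ) discriminant_isZeroAtImInfty).const_mul
    (J UpperHalfPlane.I)
  simpa using tendsto_nhds_unique ((t4.pow 3).congr heq) hΔ

end RankinCohenBracket

/-- For `τ ∈ ℍ` with `J(τ) ∉ {0,1}`, `J'(τ) ≠ 0`, `E₆(τ) ≠ 0` and
`E₆'/E₆ = 3 J''/J' − 2 J'/J − J'/(J−1)`. -/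
theorem E6_log_deriv_formula (τ : ℂ) (hτ : 0 < τ.im) (h0 : J τ ≠ 0) (h1 : J τ ≠ 1) :
    deriv J τ ≠ 0 ∧ E6 τ ≠ 0 ∧
    deriv E6 τ / E6 τ =
      3 * (iteratedDeriv 2 J τ / deriv J τ) - 2 * (deriv J τ / J τ) -
        deriv J τ / (J τ - 1) := by
  obtain ⟨c, hc, hJ'⟩ := exists_deriv_J_eq
  have hne := E4_cube_sub_E6_sq_ne_zero hτ
  have h4 : E4 τ ≠ 0 := fun h ↦ h0 (by simp [J, h])
  have h6 : E6 τ ≠ 0 := fun h ↦ h1 (by simp [J, h, h4])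
  have hnhds := UpperHalfPlane.isOpen_upperHalfPlaneSet.mem_nhds hτ
  have d4 := (differentiableOn_E4.differentiableAt hnhds).hasDerivAt
  have d6 := (differentiableOn_E6.differentiableAt hnhds).hasDerivAt
  have hev : deriv J =ᶠ[𝓝 τ] fun τ ↦ c * E4 τ ^ 2 * E6 τ / (E4 τ ^ 3 - E6 τ ^ 2) := by
    filter_upwards [hnhds] with w hw using hJ' w hw
  have hJ : HasDerivAt J _ τ := (d4.pow 3).div ((d4.pow 3).sub (d6.pow 2)) hne
  have hJ2 := ((((d4.pow 2).const_mul c).mul d6).div ((d4.pow 3).sub (d6.pow 2)) hne)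
  have hJ2' := hev.deriv_eq.trans hJ2.deriv
  rw [← iteratedDeriv_one, ← iteratedDeriv_succ'] at hJ2'
  have hval := hJ' τ hτ
  refine ⟨by rw [hval]; positivity, h6, ?_⟩
  have hJ1 : J τ - 1 = E6 τ ^ 2 / (E4 τ ^ 3 - E6 τ ^ 2) := by
    rw [J]; field_simp; ring
  have e1 : iteratedDeriv 2 J τ / deriv J τ = 2 * (deriv E4 τ / E4 τ) + deriv E6 τ / E6 τ -
      (3 * E4 τ ^ 2 * deriv E4 τ - 2 * E6 τ * deriv E6 τ) / (E4 τ ^ 3 - E6 τ ^ 2) := by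
    rw [hJ2', hval]
    simp only [Pi.pow_apply, Pi.sub_apply, Pi.mul_apply]
    field_simp
    push_cast
    ring
  have e2 : deriv J τ / J τ = 3 * (deriv E4 τ / E4 τ) -
      (3 * E4 τ ^ 2 * deriv E4 τ - 2 * E6 τ * deriv E6 τ) / (E4 τ ^ 3 - E6 τ ^ 2) := by
    rw [hJ.deriv, J]
    simp only [Pi.pow_apply]
    field_simp
    push_cast
    ring
  have e3 : deriv J τ / (J τ - 1) = 2 * (deriv E6 τ / E6 τ) -
      (3 * E4 τ ^ 2 * deriv E4 τ - 2 * E6 τ * deriv E6 τ) / (E4 τ ^ 3 - E6 τ ^ 2) := by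
    rw [hJ.deriv, hJ1]
    simp only [Pi.pow_apply]
    field_simp
    push_cast
    ring
  rw [e1, e2, e3]
  ring
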